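/- For every t ∈ {0,…,n} and every z ∈ {0,1}^n, the backward ratio is maximized by the all-zero sequence: β_t(0; z)/β_t(1; z) ≤ β_t(0; 0^n)/β_t(1; 0^n), where 0^n denotes the all-zero sequence. (All quantities β_t(x; z) are strictly positive.) -/

import Mathlib

/-!
Write `β` for the backward vector of `z` and `γ` for that of the all-zero sequence. By
positivity the claim is `β_t(0) γ_t(1) ≤ γ_t(0) β_t(1)`, proved by backward induction on `t`.
One step of the recursion reweights the vector by the emission column of `z_{t+1}` and then
applies `P`. The reweighting by the symbol `0` favours state `0` at least as much as any other
symbol (`mcE_cross`), and `P` has determinant `1 - q - r > 0`, so it preserves the order of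
ratios (`mcT_cross`).
-/

open Finset
open scoped Classical

noncomputable section

/-- Transition matrix of the binary Markov chain: `P(0,0)=1-q, P(0,1)=q, P(1,0)=r, P(1,1)=1-r`. -/
def mcT (q r : ℝ) : Bool → Bool → ℝ
  | false, false => 1 - q
  | false, true => q
  | true, false => r
  | true, true => 1 - r

/-- Emission (noise) matrix: `B(0,0)=1-e0, B(0,1)=e0, B(1,0)=e1, B(1,1)=1-e1`. -/
def mcE (e0 e1 : ℝ) : Bool → Bool → ℝ
  | false, false => 1 - e0
  | false, true => e0
  | true, false => e1
  | true, true => 1 - e1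

/-- Stationary initial distribution `π = (r/(q+r), q/(q+r))`. -/
def mcInit (q r : ℝ) : Bool → ℝ
  | false => r / (q + r)
  | true => q / (q + r)

/-- `Pr[X = x] = π(x_1) ∏_{t=1}^{n-1} P(x_t, x_{t+1})` for the hidden chain. -/
def priorX (q r : ℝ) (n : ℕ) (x : Fin n → Bool) : ℝ :=
  (if h : 0 < n then mcInit q r (x ⟨0, h⟩) else 1) *
  ∏ t : Fin (n - 1),
    mcT q r (x ⟨t.1, by have := t.isLt; omega⟩) (x ⟨t.1 + 1, by have := t.isLt; omega⟩)

/-- Probability of a joint event `E` on the hidden sequence `X` and observed sequence `Z`,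
under the joint law `Pr[X = x, Z = z] = priorX x · ∏_t B(x_t, z_t)`. -/
def eventPr (q r e0 e1 : ℝ) (n : ℕ)
    (E : (Fin n → Bool) → (Fin n → Bool) → Prop) : ℝ :=
  ∑ x : Fin n → Bool, ∑ z : Fin n → Bool,
    if E x z then priorX q r n x * ∏ t, mcE e0 e1 (x t) (z t) else 0

/-- Conditional probability `Pr[E | F]` under the joint HMM law. -/
def condPr (q r e0 e1 : ℝ) (n : ℕ)
    (E F : (Fin n → Bool) → (Fin n → Bool) → Prop) : ℝ :=
  eventPr q r e0 e1 n (fun x z => E x z ∧ F x z) / eventPr q r e0 e1 n F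

/-- `Pr[Z = z | X_i = v]`. -/
def likGivenXi (q r e0 e1 : ℝ) (n : ℕ) (i : Fin n) (v : Bool) (z : Fin n → Bool) : ℝ :=
  condPr q r e0 e1 n (fun _ z' => z' = z) (fun x _ => x i = v)

/-- Forward quantities: `α_0(x) = 1`,
`α_{t+1}(x) = B(x, z_{t+1}) (α_t(0) P(x,0) + α_t(1) P(x,1))` (1-based `z` index `t+1`
is the 0-based index `t`). -/
def fwd (q r e0 e1 : ℝ) (n : ℕ) (z : Fin n → Bool) : ℕ → Bool → ℝ
  | 0, _ => 1
  | t + 1, x =>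
    if h : t < n then
      mcE e0 e1 x (z ⟨t, h⟩) *
        (fwd q r e0 e1 n z t false * mcT q r x false +
         fwd q r e0 e1 n z t true * mcT q r x true)
    else 1

/-- Backward quantities: `β_n(x) = 1`,
`β_t(x) = β_{t+1}(0) B(0, z_{t+1}) P(x,0) + β_{t+1}(1) B(1, z_{t+1}) P(x,1)`. -/
def bwd (q r e0 e1 : ℝ) (n : ℕ) (z : Fin n → Bool) (t : ℕ) (x : Bool) : ℝ :=
  if h : t < n then
    bwd q r e0 e1 n z (t + 1) false * mcE e0 e1 false (z ⟨t, h⟩) * mcT q r x false +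
    bwd q r e0 e1 n z (t + 1) true * mcE e0 e1 true (z ⟨t, h⟩) * mcT q r x true
  else 1
  termination_by n - t

lemma mcE_pos {e0 e1 : ℝ} (he00 : 0 < e0) (he01 : e0 < 1/2) (he10 : 0 < e1) (he11 : e1 < 1/2)
    (x y : Bool) : 0 < mcE e0 e1 x y := by
  cases x <;> cases y <;> simp only [mcE] <;> linarith

lemma mcT_pos {q r : ℝ} (hq0 : 0 < q) (hq1 : q < 1/2) (hr0 : 0 < r) (hr1 : r < 1/2)
    (x y : Bool) : 0 < mcT q r x y := by
  cases x <;> cases y <;> simp only [mcT] <;> linarith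

/-- The emission likelihood ratio of state `0` against state `1` is largest at the symbol `0`. -/
lemma mcE_cross {e0 e1 : ℝ} (he01 : e0 < 1/2) (he11 : e1 < 1/2) (y : Bool) :
    mcE e0 e1 false y * mcE e0 e1 true false ≤ mcE e0 e1 false false * mcE e0 e1 true y := by
  cases y <;> simp only [mcE] <;> nlinarith

/-- The transition matrix preserves the order of ratios, as its determinant `1 - q - r` is
positive. -/
lemma mcT_cross {q r : ℝ} (hq1 : q < 1/2) (hr1 : r < 1/2) {u v w s : ℝ} (h : u * s ≤ w * v) :
    (u * mcT q r false false + v * mcT q r false true) *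
        (w * mcT q r true false + s * mcT q r true true) ≤
      (w * mcT q r false false + s * mcT q r false true) *
        (u * mcT q r true false + v * mcT q r true true) := by
  simp only [mcT]
  have hdet : 0 ≤ (1 - q - r) * (w * v - u * s) :=
    mul_nonneg (by linarith) (by linarith)
  linear_combination hdet

lemma bwd_of_lt {q r e0 e1 : ℝ} {n : ℕ} (z : Fin n → Bool) {t : ℕ} (h : t < n) (x : Bool) :
    bwd q r e0 e1 n z t x =
      bwd q r e0 e1 n z (t + 1) false * mcE e0 e1 false (z ⟨t, h⟩) * mcT q r x false +
      bwd q r e0 e1 n z (t + 1) true * mcE e0 e1 true (z ⟨t, h⟩) * mcT q r x true := by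
  rw [bwd, dif_pos h]

lemma bwd_self {q r e0 e1 : ℝ} {n : ℕ} (z : Fin n → Bool) (x : Bool) :
    bwd q r e0 e1 n z n x = 1 := by
  rw [bwd, dif_neg (lt_irrefl n)]

lemma bwd_pos {q r e0 e1 : ℝ}
    (hq0 : 0 < q) (hq1 : q < 1/2) (hr0 : 0 < r) (hr1 : r < 1/2)
    (he00 : 0 < e0) (he01 : e0 < 1/2) (he10 : 0 < e1) (he11 : e1 < 1/2)
    {n t : ℕ} (ht : t ≤ n) (z : Fin n → Bool) (x : Bool) : 0 < bwd q r e0 e1 n z t x := by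
  induction ht using Nat.decreasingInduction generalizing x with
  | self => rw [bwd_self]; exact one_pos
  | of_succ k hk ih =>
    have hE := mcE_pos he00 he01 he10 he11
    have hT := mcT_pos hq0 hq1 hr0 hr1
    rw [bwd_of_lt z hk]
    exact add_pos (mul_pos (mul_pos (ih _) (hE _ _)) (hT _ _))
      (mul_pos (mul_pos (ih _) (hE _ _)) (hT _ _))

/-- The backward ratio `β_t(0;z)/β_t(1;z)` is maximized by the all-zero sequence. -/
theorem stmt4 (q r e0 e1 : ℝ)
    (hq0 : 0 < q) (hq1 : q < 1/2) (hr0 : 0 < r) (hr1 : r < 1/2)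
    (he00 : 0 < e0) (he01 : e0 < 1/2) (he10 : 0 < e1) (he11 : e1 < 1/2)
    (n : ℕ) (hn : 1 ≤ n) (t : ℕ) (ht : t ≤ n) (z : Fin n → Bool) :
    bwd q r e0 e1 n z t false / bwd q r e0 e1 n z t true
      ≤ bwd q r e0 e1 n (fun _ => false) t false /
        bwd q r e0 e1 n (fun _ => false) t true := by
  have hβ := fun {t : ℕ} (ht : t ≤ n) =>
    bwd_pos hq0 hq1 hr0 hr1 he00 he01 he10 he11 (n := n) (t := t) ht
  have hE := mcE_pos he00 he01 he10 he11
  rw [div_le_div_iff₀ (hβ ht _ _) (hβ ht _ _)]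
  induction ht using Nat.decreasingInduction with
  | self => simp only [bwd_self, le_refl]
  | of_succ k hk ih =>
    simp only [bwd_of_lt _ hk]
    apply mcT_cross hq1 hr1
    have hmul := mul_le_mul ih (mcE_cross he01 he11 (z ⟨k, hk⟩))
      (mul_pos (hE _ _) (hE _ _)).le (mul_pos (hβ hk _ _) (hβ hk _ _)).le
    linear_combination hmul

end
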